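/- Strong unique continuation in the borderline case: Let Ω ⊂ ℝⁿ be open and connected, and let f : [0,∞) → ℝ be continuous, non-decreasing, and satisfy condition (6.1) with constant M > 0 (the case γ = 3). If u ∈ C(Ω) is a bounded non-negative viscosity solution of Δ∞u = f(u) in Ω and u(z) = 0 for some z ∈ Ω, then u ≡ 0 in Ω. -/

import Mathlib

open Set Metric Filter MeasureTheory

/-- The infinity Laplacian of a (C²) function `φ` at `x`:
`Δ∞φ(x) = Σ_{i,j} ∂_iφ(x) ∂_jφ(x) ∂_{ij}φ(x)`. -/
noncomputable def infLap {n : ℕ} (φ : EuclideanSpace ℝ (Fin n) → ℝ)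
    (x : EuclideanSpace ℝ (Fin n)) : ℝ :=
  ∑ i : Fin n, ∑ j : Fin n,
    fderiv ℝ φ x (EuclideanSpace.single i 1) * fderiv ℝ φ x (EuclideanSpace.single j 1) *
      fderiv ℝ (fun y => fderiv ℝ φ y (EuclideanSpace.single i 1)) x (EuclideanSpace.single j 1)

/-- `u` is a viscosity supersolution of `Δ∞u = F(x, u(x))` in `Ω`. -/
def IsViscSupersol {n : ℕ} (Ω : Set (EuclideanSpace ℝ (Fin n)))
    (u : EuclideanSpace ℝ (Fin n) → ℝ)
    (F : EuclideanSpace ℝ (Fin n) → ℝ → ℝ) : Prop :=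
  ∀ φ : EuclideanSpace ℝ (Fin n) → ℝ, ContDiff ℝ 2 φ →
    ∀ x₀ ∈ Ω, φ x₀ = u x₀ → IsLocalMin (fun x => u x - φ x) x₀ →
      infLap φ x₀ ≤ F x₀ (φ x₀)

/-- `u` is a viscosity subsolution of `Δ∞u = F(x, u(x))` in `Ω`. -/
def IsViscSubsol {n : ℕ} (Ω : Set (EuclideanSpace ℝ (Fin n)))
    (u : EuclideanSpace ℝ (Fin n) → ℝ)
    (F : EuclideanSpace ℝ (Fin n) → ℝ → ℝ) : Prop :=
  ∀ φ : EuclideanSpace ℝ (Fin n) → ℝ, ContDiff ℝ 2 φ →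
    ∀ x₀ ∈ Ω, φ x₀ = u x₀ → IsLocalMax (fun x => u x - φ x) x₀ →
      F x₀ (φ x₀) ≤ infLap φ x₀

/-- `u` is a viscosity solution of `Δ∞u = F(x, u(x))` in `Ω`. -/
def IsViscSol {n : ℕ} (Ω : Set (EuclideanSpace ℝ (Fin n)))
    (u : EuclideanSpace ℝ (Fin n) → ℝ)
    (F : EuclideanSpace ℝ (Fin n) → ℝ → ℝ) : Prop :=
  IsViscSupersol Ω u F ∧ IsViscSubsol Ω u F

/-- Condition (6.1): for every `T > 0` there is `δ₀ > 0` such that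
`0 ≤ f(δt) ≤ M δ³ f(t)` for all `0 < t ≤ T` and `0 < δ ≤ δ₀`. -/
def Cond61 (f : ℝ → ℝ) (M : ℝ) : Prop :=
  ∀ T > 0, ∃ δ₀ > 0, ∀ t : ℝ, 0 < t → t ≤ T → ∀ δ : ℝ, 0 < δ → δ ≤ δ₀ →
    0 ≤ f (δ * t) ∧ f (δ * t) ≤ M * δ ^ 3 * f t

/-!
Condition (6.1) with `T = 1` gives `f(t) ≤ C t³` for small `t ≥ 0`, and for a supersolution
`u ≥ 0` this makes positivity spread from the centre `c` of a ball `closedBall c ρ ⊆ Ω` to the whole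
open ball. Suppose `u c > 0` but `u y ≤ 0` at distance `R < ρ` from `c`, and let `m > 0` be a
lower bound for `u` near `c`. The Gaussian barrier `v(x) = m (exp (-a |x - c|²) - exp (-a R²))`
lies strictly below `u` near `c` and on the sphere of radius `ρ`, where it is negative, but not at
`y`; so `u - v` has an interior minimum in the annulus between. For `a` large, `Δ∞v > C v³` in
that annulus. Both `Δ∞v` and `v³` are homogeneous of degree three in `v`, so `a` depends on `C`
and the inner radius but not on `m`, and `m` can be taken so small that the cubic bound applies at
the minimum point, contradicting that `u` is a supersolution. Hence the zero set of `u` is open as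
well as relatively closed in `Ω`.
-/

section InfLap

variable {n : ℕ}

lemma infLap_add_const (φ : EuclideanSpace ℝ (Fin n) → ℝ) (k : ℝ) (x : EuclideanSpace ℝ (Fin n)) :
    infLap (fun y => φ y + k) x = infLap φ x := by
  simp only [infLap, fderiv_add_const]

lemma fderiv_comp_normSq_sub_apply_single {g : ℝ → ℝ} {g' : ℝ} {c x : EuclideanSpace ℝ (Fin n)}
    (hg : HasDerivAt g g' (‖x - c‖ ^ 2)) (i : Fin n) :
    fderiv ℝ (fun y => g (‖y - c‖ ^ 2)) x (EuclideanSpace.single i 1)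
      = 2 * g' * (x i - c i) := by
  have hnormSq := ((hasFDerivAt_id (𝕜 := ℝ) x).sub_const c).norm_sq
  have hcomp : HasFDerivAt (fun y => g (‖y - c‖ ^ 2)) _ x := hg.comp_hasFDerivAt x hnormSq
  rw [hcomp.fderiv]
  simp only [id_eq, map_sub, ContinuousLinearMap.comp_id, smul_apply, sub_apply, coe_innerSL_apply,
    EuclideanSpace.inner_single_right, Real.ringHom_apply, one_mul, nsmul_eq_mul, Nat.cast_ofNat,
    smul_eq_mul]
  ring

lemma fderiv_fderiv_comp_normSq_sub_apply_single {g g' : ℝ → ℝ} {g'' : ℝ}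
    {c x : EuclideanSpace ℝ (Fin n)} (hg : ∀ s, HasDerivAt g (g' s) s)
    (hg' : HasDerivAt g' g'' (‖x - c‖ ^ 2)) (i j : Fin n) :
    fderiv ℝ (fun y => fderiv ℝ (fun y => g (‖y - c‖ ^ 2)) y (EuclideanSpace.single i 1)) x
        (EuclideanSpace.single j 1)
      = 4 * g'' * (x i - c i) * (x j - c j) + if i = j then 2 * g' (‖x - c‖ ^ 2) else 0 := by
  simp_rw [fderiv_comp_normSq_sub_apply_single (hg _)]
  have hnormSq := ((hasFDerivAt_id (𝕜 := ℝ) x).sub_const c).norm_sq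
  have hcomp : HasFDerivAt (fun y => g' (‖y - c‖ ^ 2)) _ x := hg'.comp_hasFDerivAt x hnormSq
  have hcoord : HasFDerivAt (fun y : EuclideanSpace ℝ (Fin n) => y i - c i)
      (EuclideanSpace.proj i : EuclideanSpace ℝ (Fin n) →L[ℝ] ℝ) x :=
    (EuclideanSpace.proj i : EuclideanSpace ℝ (Fin n) →L[ℝ] ℝ).hasFDerivAt.sub_const (c i)
  rw [((hcomp.const_mul 2).fun_mul hcoord).fderiv]
  simp only [id_eq, map_sub, ContinuousLinearMap.comp_id, add_apply, smul_apply, PiLp.proj_apply,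
    PiLp.single_apply, smul_eq_mul, mul_ite, mul_one, mul_zero, sub_apply, coe_innerSL_apply,
    EuclideanSpace.inner_single_right, Real.ringHom_apply, one_mul, nsmul_eq_mul, Nat.cast_ofNat]
  split_ifs <;> ring

lemma infLap_comp_normSq_sub {g g' : ℝ → ℝ} {g'' : ℝ} {c x : EuclideanSpace ℝ (Fin n)}
    (hg : ∀ s, HasDerivAt g (g' s) s) (hg' : HasDerivAt g' g'' (‖x - c‖ ^ 2)) :
    infLap (fun y => g (‖y - c‖ ^ 2)) x
      = 8 * g' (‖x - c‖ ^ 2) ^ 2 * ‖x - c‖ ^ 2 *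
        (2 * g'' * ‖x - c‖ ^ 2 + g' (‖x - c‖ ^ 2)) := by
  simp only [infLap, fderiv_fderiv_comp_normSq_sub_apply_single hg hg']
  simp only [fderiv_comp_normSq_sub_apply_single (hg _)]
  generalize g' (‖x - c‖ ^ 2) = p
  have hnormSq : ‖x - c‖ ^ 2 = ∑ i, (x i - c i) ^ 2 := by
    simp [EuclideanSpace.norm_sq_eq]
  have hterm (i j : Fin n) :
      2 * p * (x i - c i) * (2 * p * (x j - c j)) *
          (4 * g'' * (x i - c i) * (x j - c j) + if i = j then 2 * p else 0)
        = 16 * p ^ 2 * g'' * ((x i - c i) ^ 2 * (x j - c j) ^ 2)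
          + if i = j then 8 * p ^ 3 * (x i - c i) ^ 2 else 0 := by
    split_ifs with hij
    · subst hij; ring
    · ring
  simp only [hterm, Finset.sum_add_distrib, Finset.sum_ite_eq, Finset.mem_univ, if_true,
    ← Finset.mul_sum, ← Finset.sum_mul, ← hnormSq]
  ring

end InfLap

section GaussianBarrier

variable {n : ℕ} {c x : EuclideanSpace ℝ (Fin n)} {m a R : ℝ}

/-- The radial barrier of Hopf's lemma: a Gaussian of height `m` and rate `a` centred at `c`,
shifted so as to vanish on the sphere of radius `R`. -/
noncomputable def gaussianBarrier (c : EuclideanSpace ℝ (Fin n)) (m a R : ℝ)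
    (x : EuclideanSpace ℝ (Fin n)) : ℝ :=
  m * (Real.exp (-a * ‖x - c‖ ^ 2) - Real.exp (-a * R ^ 2))

lemma contDiff_gaussianBarrier {k : WithTop ℕ∞} : ContDiff ℝ k (gaussianBarrier c m a R) := by
  have hnormSq : ContDiff ℝ k fun y : EuclideanSpace ℝ (Fin n) => ‖y - c‖ ^ 2 :=
    (contDiff_id.sub contDiff_const).norm_sq ℝ
  exact contDiff_const.mul ((contDiff_const.mul hnormSq).exp.sub contDiff_const)

lemma gaussianBarrier_eq_zero (hx : ‖x - c‖ = R) : gaussianBarrier c m a R x = 0 := by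
  rw [gaussianBarrier, hx, sub_self, mul_zero]

lemma gaussianBarrier_neg (hm : 0 < m) (ha : 0 < a) (hR : 0 ≤ R) (hx : R < ‖x - c‖) :
    gaussianBarrier c m a R x < 0 := by
  refine mul_neg_of_pos_of_neg hm (sub_neg.2 (Real.exp_lt_exp.2 ?_))
  exact mul_lt_mul_of_neg_left (by gcongr) (neg_lt_zero.2 ha)

lemma gaussianBarrier_lt_mul_exp (hm : 0 < m) :
    gaussianBarrier c m a R x < m * Real.exp (-a * ‖x - c‖ ^ 2) :=
  mul_lt_mul_of_pos_left (sub_lt_self _ (Real.exp_pos _)) hm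

lemma gaussianBarrier_lt (hm : 0 < m) (ha : 0 ≤ a) : gaussianBarrier c m a R x < m := by
  refine (gaussianBarrier_lt_mul_exp hm).trans_le (mul_le_of_le_one_right hm.le ?_)
  exact Real.exp_le_one_iff.2 (mul_nonpos_of_nonpos_of_nonneg (neg_nonpos.2 ha) (sq_nonneg _))

lemma infLap_gaussianBarrier :
    infLap (gaussianBarrier c m a R) x
      = 8 * (m * Real.exp (-a * ‖x - c‖ ^ 2)) ^ 3 *
        (a ^ 2 * (a * ‖x - c‖ ^ 2) * (2 * (a * ‖x - c‖ ^ 2) - 1)) := by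
  have hexp (s : ℝ) : HasDerivAt (fun s => Real.exp (-a * s)) (-a * Real.exp (-a * s)) s := by
    simpa [mul_comm] using ((hasDerivAt_id s).const_mul (-a)).exp
  have hg (s : ℝ) : HasDerivAt (fun s => m * (Real.exp (-a * s) - Real.exp (-a * R ^ 2)))
      (m * (-a * Real.exp (-a * s))) s :=
    ((hexp s).sub_const _).const_mul m
  refine (infLap_comp_normSq_sub hg (((hexp _).const_mul (-a)).const_mul m)).trans ?_
  ring

lemma mul_cube_gaussianBarrier_lt_infLap {C : ℝ} (hC : 0 ≤ C) (hm : 0 < m) (haC : C < 8 * a ^ 2)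
    (hx : 1 ≤ a * ‖x - c‖ ^ 2) :
    C * gaussianBarrier c m a R x ^ 3 < infLap (gaussianBarrier c m a R) x := by
  have hle := (gaussianBarrier_lt_mul_exp (c := c) (a := a) (R := R) (x := x) hm).le
  have hheight : 0 < m * Real.exp (-a * ‖x - c‖ ^ 2) := by positivity
  rw [infLap_gaussianBarrier]
  set height := m * Real.exp (-a * ‖x - c‖ ^ 2)
  set q := a * ‖x - c‖ ^ 2
  have hq : 1 ≤ q * (2 * q - 1) := by nlinarith
  calc C * gaussianBarrier c m a R x ^ 3
      ≤ C * height ^ 3 := by gcongr ?_ * ?_; exact (Odd.pow_le_pow (by decide)).2 hle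
    _ < 8 * a ^ 2 * height ^ 3 := by gcongr
    _ ≤ 8 * a ^ 2 * height ^ 3 * (q * (2 * q - 1)) := le_mul_of_one_le_right (by positivity) hq
    _ = 8 * height ^ 3 * (a ^ 2 * q * (2 * q - 1)) := by ring

end GaussianBarrier

lemma exists_isLocalMin_of_lowerSemicontinuousOn {X β : Type*} [TopologicalSpace X] [LinearOrder β]
    {h : X → β} {K U : Set X} {y : X} (hK : IsCompact K) (hU : IsOpen U) (hUK : U ⊆ K)
    (hh : LowerSemicontinuousOn h K) (hy : y ∈ K) (hlt : ∀ w ∈ K \ U, h y < h w) :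
    ∃ x ∈ U, h x ≤ h y ∧ IsLocalMin h x := by
  obtain ⟨x, hxK, hmin⟩ := hh.exists_isMinOn ⟨y, hy⟩ hK
  have hxU : x ∈ U := by
    by_contra hxU
    exact (hlt x ⟨hxK, hxU⟩).not_ge (hmin hy)
  exact ⟨x, hxU, hmin hy, hmin.isLocalMin (mem_of_superset (hU.mem_nhds hxU) hUK)⟩

lemma exists_isLocalMin_sub_gaussianBarrier {n : ℕ} {u : EuclideanSpace ℝ (Fin n) → ℝ}
    {c y : EuclideanSpace ℝ (Fin n)} {r ρ m a : ℝ} (hu : LowerSemicontinuousOn u (closedBall c ρ))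
    (hu0 : ∀ x ∈ closedBall c ρ, 0 ≤ u x) (hm : 0 < m) (ha : 0 < a)
    (hmu : ∀ x ∈ closedBall c r, m ≤ u x) (hy : y ∈ ball c ρ) (huy : u y ≤ 0) :
    ∃ x ∈ ball c ρ \ closedBall c r, u x ≤ gaussianBarrier c m a ‖y - c‖ x ∧
      IsLocalMin (fun w => u w - gaussianBarrier c m a ‖y - c‖ w) x := by
  set v := gaussianBarrier c m a ‖y - c‖
  have hvy : v y = 0 := gaussianBarrier_eq_zero rfl
  have hv : Continuous fun x => -v x := (contDiff_gaussianBarrier (k := 0)).continuous.neg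
  have hlsc : LowerSemicontinuousOn (fun x => u x - v x) (closedBall c ρ) := by
    simpa only [sub_eq_add_neg] using hu.add hv.continuousOn.lowerSemicontinuousOn
  have hbdry : ∀ w ∈ closedBall c ρ \ (ball c ρ \ closedBall c r), u y - v y < u w - v w := by
    rintro w ⟨hwρ, hw⟩
    suffices v w < u w by linarith
    by_cases hwr : w ∈ closedBall c r
    · exact (gaussianBarrier_lt hm ha.le).trans_le (hmu w hwr)
    · have hρw : ρ ≤ dist w c := not_lt.1 fun h => hw ⟨h, hwr⟩
      have hyw : ‖y - c‖ < ‖w - c‖ := by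
        simpa only [dist_eq_norm] using (mem_ball.1 hy).trans_le hρw
      exact (gaussianBarrier_neg hm ha (norm_nonneg _) hyw).trans_le (hu0 w hwρ)
  obtain ⟨x, hx, hxy, hmin⟩ := exists_isLocalMin_of_lowerSemicontinuousOn
    (isCompact_closedBall c ρ) (isOpen_ball.sdiff isClosed_closedBall)
    (sdiff_subset.trans ball_subset_closedBall) hlsc (ball_subset_closedBall hy) hbdry
  exact ⟨x, hx, by linarith, hmin⟩

namespace IsViscSupersol

variable {n : ℕ} {Ω : Set (EuclideanSpace ℝ (Fin n))} {u : EuclideanSpace ℝ (Fin n) → ℝ}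
  {F : EuclideanSpace ℝ (Fin n) → ℝ → ℝ}

lemma infLap_le_of_isLocalMin (hsup : IsViscSupersol Ω u F) {φ : EuclideanSpace ℝ (Fin n) → ℝ}
    (hφ : ContDiff ℝ 2 φ) {x : EuclideanSpace ℝ (Fin n)} (hx : x ∈ Ω)
    (hmin : IsLocalMin (fun y => u y - φ y) x) : infLap φ x ≤ F x (u x) := by
  have htest := hsup (fun y => φ y + (u x - φ x)) (hφ.add contDiff_const) x hx (by ring)
    (by filter_upwards [hmin] with y hy; linarith)
  rwa [infLap_add_const, add_sub_cancel] at htest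

variable {C δ : ℝ}

lemma gaussianBarrier_lt_of_isLocalMin (hsup : IsViscSupersol Ω u F) (hC : 0 ≤ C)
    (hF : ∀ x ∈ Ω, ∀ t ∈ Icc 0 δ, F x t ≤ C * t ^ 3) {c x : EuclideanSpace ℝ (Fin n)} {m a R : ℝ}
    (hm : 0 < m) (hmδ : m ≤ δ) (haC : C < 8 * a ^ 2) (hxΩ : x ∈ Ω) (hux : 0 ≤ u x)
    (hxc : 1 ≤ a * ‖x - c‖ ^ 2) (hmin : IsLocalMin (fun y => u y - gaussianBarrier c m a R y) x) :
    gaussianBarrier c m a R x < u x := by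
  by_contra! hle
  have ha : 0 < a := pos_of_mul_pos_left (one_pos.trans_le hxc) (sq_nonneg _)
  have huδ : u x ≤ δ := hle.trans ((gaussianBarrier_lt hm ha.le).le.trans hmδ)
  have hlt : infLap (gaussianBarrier c m a R) x < infLap (gaussianBarrier c m a R) x := calc
    _ ≤ F x (u x) := hsup.infLap_le_of_isLocalMin contDiff_gaussianBarrier hxΩ hmin
    _ ≤ C * u x ^ 3 := hF x hxΩ _ ⟨hux, huδ⟩
    _ ≤ C * gaussianBarrier c m a R x ^ 3 := by gcongr
    _ < _ := mul_cube_gaussianBarrier_lt_infLap hC hm haC hxc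
  exact hlt.false

lemma pos_of_le_on_closedBall (hsup : IsViscSupersol Ω u F) (hu : LowerSemicontinuousOn u Ω)
    (hu0 : ∀ x ∈ Ω, 0 ≤ u x) (hC : 0 ≤ C) (hF : ∀ x ∈ Ω, ∀ t ∈ Icc 0 δ, F x t ≤ C * t ^ 3)
    {c : EuclideanSpace ℝ (Fin n)} {r ρ m : ℝ} (hr : 0 < r) (hρ : closedBall c ρ ⊆ Ω) (hm : 0 < m)
    (hmδ : m ≤ δ) (hmu : ∀ x ∈ closedBall c r, m ≤ u x) :
    ∀ y ∈ ball c ρ, 0 < u y := by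
  intro y hy
  by_contra! huy
  obtain ⟨a, ha, haC, har⟩ : ∃ a : ℝ, 0 < a ∧ C < 8 * a ^ 2 ∧ 1 ≤ a * r ^ 2 := by
    have hinv : 0 < (r ^ 2)⁻¹ := by positivity
    refine ⟨1 + C + (r ^ 2)⁻¹, by positivity, by nlinarith, ?_⟩
    calc 1 = (r ^ 2)⁻¹ * r ^ 2 := (inv_mul_cancel₀ (by positivity)).symm
      _ ≤ _ := by gcongr; linarith
  obtain ⟨x, ⟨hxρ, hxr⟩, hle, hmin⟩ := exists_isLocalMin_sub_gaussianBarrier (hu.mono hρ)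
    (fun x hx => hu0 x (hρ hx)) hm ha hmu hy huy
  have hxΩ : x ∈ Ω := hρ (ball_subset_closedBall hxρ)
  have hrx : r < ‖x - c‖ := by
    simpa only [mem_closedBall, dist_eq_norm, not_le] using hxr
  have hxa : 1 ≤ a * ‖x - c‖ ^ 2 := har.trans (by gcongr)
  exact hle.not_gt <| hsup.gaussianBarrier_lt_of_isLocalMin hC hF hm hmδ haC hxΩ (hu0 x hxΩ)
    hxa hmin

lemma pos_on_ball (hsup : IsViscSupersol Ω u F) (hu : LowerSemicontinuousOn u Ω)
    (hu0 : ∀ x ∈ Ω, 0 ≤ u x) (hC : 0 ≤ C) (hδ : 0 < δ)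
    (hF : ∀ x ∈ Ω, ∀ t ∈ Icc 0 δ, F x t ≤ C * t ^ 3) {c : EuclideanSpace ℝ (Fin n)} {ρ : ℝ}
    (hρ : closedBall c ρ ⊆ Ω) (huc : 0 < u c) :
    ∀ y ∈ ball c ρ, 0 < u y := by
  intro y hy
  obtain ⟨m, hm, hmlt⟩ := exists_between (lt_min huc hδ)
  have hnhds : Ω ∈ nhds c := mem_of_superset (closedBall_mem_nhds c (pos_of_mem_ball hy)) hρ
  have hev : ∀ᶠ x in nhds c, m < u x := by
    simpa only [nhdsWithin_eq_nhds.2 hnhds] using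
      hu c (mem_of_mem_nhds hnhds) m (hmlt.trans_le (min_le_left _ _))
  obtain ⟨r, hr, hmu⟩ := nhds_basis_closedBall.eventually_iff.1 hev
  exact hsup.pos_of_le_on_closedBall hu hu0 hC hF hr hρ hm (hmlt.le.trans (min_le_right _ _))
    (fun x hx => (hmu hx).le) y hy

lemma isOpen_zeroSet (hsup : IsViscSupersol Ω u F) (hΩ : IsOpen Ω) (hu : LowerSemicontinuousOn u Ω)
    (hu0 : ∀ x ∈ Ω, 0 ≤ u x) (hC : 0 ≤ C) (hδ : 0 < δ)
    (hF : ∀ x ∈ Ω, ∀ t ∈ Icc 0 δ, F x t ≤ C * t ^ 3) :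
    IsOpen {x ∈ Ω | u x = 0} := by
  refine Metric.isOpen_iff.2 fun z ⟨hz, huz⟩ => ?_
  obtain ⟨ρ, hρ0, hρ⟩ := Metric.isOpen_iff.1 hΩ z hz
  refine ⟨ρ / 2, half_pos hρ0, fun x hx => ?_⟩
  have hsub : closedBall x (ρ / 2) ⊆ Ω :=
    (closedBall_subset_ball' (by linarith [mem_ball.1 hx])).trans hρ
  have hxΩ : x ∈ Ω := hsub (mem_closedBall_self (half_pos hρ0).le)
  refine ⟨hxΩ, ((hu0 x hxΩ).eq_or_lt.resolve_right fun hux => ?_).symm⟩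
  exact (hsup.pos_on_ball hu hu0 hC hδ hF hsub hux z (mem_ball_comm.1 hx)).ne' huz

end IsViscSupersol

lemma Cond61.exists_le_mul_cube {f : ℝ → ℝ} {M : ℝ} (hf : Cond61 f M)
    (hmono : MonotoneOn f (Ici 0)) :
    ∃ C ≥ 0, ∃ δ > 0, ∀ t ∈ Icc 0 δ, f t ≤ C * t ^ 3 := by
  obtain ⟨δ, hδ, hscale⟩ := hf 1 one_pos
  have hpos : ∀ t ∈ Ioc 0 δ, f t ≤ |M * f 1| * t ^ 3 := fun t ⟨ht, htδ⟩ => calc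
    f t = f (t * 1) := by rw [mul_one]
    _ ≤ M * t ^ 3 * f 1 := (hscale 1 one_pos le_rfl t ht htδ).2
    _ = M * f 1 * t ^ 3 := by ring
    _ ≤ |M * f 1| * t ^ 3 := by gcongr; exact le_abs_self _
  refine ⟨|M * f 1|, abs_nonneg _, δ, hδ, fun t ⟨ht, htδ⟩ => ?_⟩
  rcases ht.eq_or_lt with rfl | ht
  · have hlim : Tendsto (fun t : ℝ => |M * f 1| * t ^ 3) (nhdsWithin 0 (Ioi 0))
        (nhds (|M * f 1| * 0 ^ 3)) :=
      (by fun_prop : Continuous fun t : ℝ => |M * f 1| * t ^ 3).continuousWithinAt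
    refine ge_of_tendsto hlim ?_
    filter_upwards [Ioc_mem_nhdsGT hδ] with t ht
    exact (hmono self_mem_Ici ht.1.le ht.1.le).trans (hpos t ht)
  · exact hpos t ⟨ht, htδ⟩

theorem borderline_unique_continuation_general {n : ℕ} {Ω : Set (EuclideanSpace ℝ (Fin n))}
    (hΩo : IsOpen Ω) (hΩconn : IsPreconnected Ω) {F : EuclideanSpace ℝ (Fin n) → ℝ → ℝ} {C δ : ℝ}
    (hC : 0 ≤ C) (hδ : 0 < δ) (hF : ∀ x ∈ Ω, ∀ t ∈ Icc 0 δ, F x t ≤ C * t ^ 3)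
    {u : EuclideanSpace ℝ (Fin n) → ℝ} (hu : LowerSemicontinuousOn u Ω) (hu0 : ∀ x ∈ Ω, 0 ≤ u x)
    (hsup : IsViscSupersol Ω u F) {z : EuclideanSpace ℝ (Fin n)} (hz : z ∈ Ω) (huz : u z = 0) :
    ∀ x ∈ Ω, u x = 0 := by
  have hzeros : IsOpen {x ∈ Ω | u x = 0} := hsup.isOpen_zeroSet hΩo hu hu0 hC hδ hF
  have hpos : IsOpen {x ∈ Ω | 0 < u x} := by
    refine isOpen_iff_mem_nhds.2 fun x ⟨hx, hux⟩ => ?_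
    exact inter_mem (hΩo.mem_nhds hx) (hΩo.nhdsWithin_eq hx ▸ hu x hx 0 hux)
  have hdisj : Disjoint {x ∈ Ω | u x = 0} {x ∈ Ω | 0 < u x} :=
    disjoint_left.2 fun _ hx hx' => hx'.2.ne' hx.2
  have hcover : Ω ⊆ {x ∈ Ω | u x = 0} ∪ {x ∈ Ω | 0 < u x} := fun x hx =>
    (hu0 x hx).eq_or_lt.imp (fun h => ⟨hx, h.symm⟩) fun h => ⟨hx, h⟩
  exact fun x hx => (hΩconn.subset_left_of_subset_union hzeros hpos hdisj hcover
    ⟨z, hz, hz, huz⟩ hx).2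

/-- Strong unique continuation in the borderline case (Theorem 5.1). -/
theorem borderline_unique_continuation {n : ℕ} (Ω : Set (EuclideanSpace ℝ (Fin n)))
    (hΩo : IsOpen Ω) (hΩconn : IsConnected Ω)
    (f : ℝ → ℝ) (M : ℝ) (hM : 0 < M)
    (hfc : ContinuousOn f (Ici 0)) (hfmono : MonotoneOn f (Ici 0)) (hf : Cond61 f M)
    (u : EuclideanSpace ℝ (Fin n) → ℝ)
    (huc : ContinuousOn u Ω) (hu0 : ∀ x ∈ Ω, 0 ≤ u x)
    (hub : ∃ B, ∀ x ∈ Ω, u x ≤ B)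
    (hsol : IsViscSol Ω u (fun _ t => f t))
    (z : EuclideanSpace ℝ (Fin n)) (hz : z ∈ Ω) (huz : u z = 0) :
    ∀ x ∈ Ω, u x = 0 := by
  obtain ⟨C, hC, δ, hδ, hfC⟩ := hf.exists_le_mul_cube hfmono
  exact borderline_unique_continuation_general hΩo hΩconn.isPreconnected hC hδ (fun _ _ => hfC)
    huc.lowerSemicontinuousOn hu0 hsol.1 hz huz
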